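/- (Sample complexity under uniform logging) In the setting of the oracle inequality for Gaussian linear policies under uniform logging (prior P = N(μ0, I_{dK}), posteriors N(μ, I_{dK}) over hypotheses h_θ(x) = argmax_a φ(x)ᵀθ_a, uniform logging policy π0(a|x) = 1/K, λ = 1/√n, learned parameter μ̂ minimizing the bound-based objective and μ_* minimizing the risk over the Gaussian family), let δ ∈ (0,1), α ∈ [1 − log 2/log K, 1], and ε > 2(1 − K^{α−1}). If √n ≥ ( ‖μ_*−μ0‖ + ‖μ_*−μ0‖² + 2·log(4/δ) + √(2·log(4√n/δ)) + 2K^{2α} ) / ( ε − 2(1 − K^{α−1}) ), then P( R(π_{Q_{μ̂}}) ≤ R(π_{Q_{μ_*}}) + ε ) ≥ 1 − δ. -/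

import Mathlib

open MeasureTheory ProbabilityTheory Real

open Classical in
/-- Kullback–Leibler divergence between two measures, valued in `ℝ≥0∞` (junk value `⊤` when
`Q` is not absolutely continuous w.r.t. `P` or the log-likelihood ratio is not integrable). -/
noncomputable def klDiv {α : Type*} [MeasurableSpace α] (Q P : Measure α) : ENNReal :=
  if Q ≪ P ∧ Integrable (llr Q P) Q then ENNReal.ofReal (∫ x, llr Q P x ∂Q) else ⊤

/-- `Q` has density `exp L` with respect to `P`, and `L` has `Q`-mean `k`. -/
structure HasLogDens {E : Type*} [MeasurableSpace E] (P Q : Measure E) (L : E → ℝ) (k : ℝ) :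
    Prop where
  meas : Measurable L
  eq : Q = P.withDensity (fun x => ENNReal.ofReal (Real.exp (L x)))
  integrable : Integrable L Q
  mean : ∫ x, L x ∂Q = k

theorem hasLogDens_gaussian (m m0 : ℝ) :
    HasLogDens (gaussianReal m0 1) (gaussianReal m 1)
      (fun x => (m - m0) * x - (m ^ 2 - m0 ^ 2) / 2) ((m - m0) ^ 2 / 2) := by
  have hid : Integrable (fun x : ℝ => x) (gaussianReal m 1) :=
    (memLp_id_gaussianReal (μ := m) (v := 1) 1).integrable (by norm_num)
  refine ⟨by fun_prop, ?_, ?_, ?_⟩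
  · rw [gaussianReal_of_var_ne_zero _ one_ne_zero, gaussianReal_of_var_ne_zero _ one_ne_zero,
      ← withDensity_mul _ (measurable_gaussianPDF _ _) (by fun_prop)]
    congr 1
    funext x
    simp only [Pi.mul_apply, gaussianPDF]
    rw [← ENNReal.ofReal_mul (gaussianPDFReal_nonneg _ _ _)]
    congr 1
    simp only [gaussianPDFReal]
    rw [mul_assoc (√_)⁻¹, ← Real.exp_add]
    congr 2
    simp
    ring
  · exact (hid.const_mul _).sub (integrable_const _)
  · rw [integral_sub (hid.const_mul _) (integrable_const _), integral_const_mul,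
      integral_id_gaussianReal]
    simp
    ring

theorem HasLogDens.exp_integrable {E : Type*} [MeasurableSpace E] {P Q : Measure E} {L : E → ℝ}
    {k : ℝ} [IsFiniteMeasure Q] (h : HasLogDens P Q L k) :
    Integrable (fun x => Real.exp (L x)) P := by
  have := h.meas
  refine ⟨by fun_prop, ?_⟩
  rw [hasFiniteIntegral_iff_ofReal (Filter.Eventually.of_forall fun x => (Real.exp_pos _).le)]
  have h1 : Q Set.univ < ⊤ := measure_lt_top _ _
  rw [h.eq, withDensity_apply _ MeasurableSet.univ] at h1
  simpa using h1

theorem HasLogDens.pi {ι : Type*} [Fintype ι] {E : ι → Type*} [∀ i, MeasurableSpace (E i)]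
    {P Q : ∀ i, Measure (E i)} [∀ i, IsProbabilityMeasure (P i)] [∀ i, IsProbabilityMeasure (Q i)]
    {L : ∀ i, E i → ℝ} {k : ι → ℝ} (h : ∀ i, HasLogDens (P i) (Q i) (L i) (k i)) :
    HasLogDens (Measure.pi P) (Measure.pi Q) (fun x => ∑ i, L i (x i)) (∑ i, k i) := by
  have hm := fun i => (h i).meas
  have hme : ∀ i, Measurable fun x : (∀ i, E i) => L i (x i) :=
    fun i => (hm i).comp (measurable_pi_apply i)
  have hint : ∀ i, Integrable (fun x : (∀ i, E i) => L i (x i)) (Measure.pi Q) :=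
    fun i => integrable_comp_eval (h i).integrable
  refine ⟨by fun_prop, ?_, integrable_finsetSum _ fun i _ => hint i, ?_⟩
  · symm
    refine (Measure.pi_eq fun s hs => ?_).symm
    have hbox : MeasurableSet (Set.univ.pi s) := MeasurableSet.univ_pi hs
    rw [withDensity_apply _ hbox, ← lintegral_indicator hbox]
    have e1 : (fun x : (∀ i, E i) => (Set.univ.pi s).indicator
        (fun x => ENNReal.ofReal (Real.exp (∑ i, L i (x i)))) x)
        = fun x => ENNReal.ofReal (∏ i, (s i).indicator (fun y => Real.exp (L i y)) (x i)) := by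
      funext x
      by_cases hx : x ∈ Set.univ.pi s
      · rw [Set.indicator_of_mem hx, Real.exp_sum]
        congr 1
        refine Finset.prod_congr rfl fun i _ => ?_
        rw [Set.indicator_of_mem (hx i trivial)]
      · rw [Set.indicator_of_notMem hx]
        simp only [Set.mem_pi, Set.mem_univ, true_imp_iff, not_forall] at hx
        obtain ⟨i, hi⟩ := hx
        rw [Finset.prod_eq_zero (Finset.mem_univ i) (Set.indicator_of_notMem hi _)]
        simp
    rw [e1]
    have hI : ∀ i, Integrable ((s i).indicator fun y => Real.exp (L i y)) (P i) :=
      fun i => (h i).exp_integrable.indicator (hs i)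
    have hnn : ∀ i y, 0 ≤ (s i).indicator (fun y => Real.exp (L i y)) y :=
      fun i y => Set.indicator_nonneg (fun _ _ => (Real.exp_pos _).le) y
    rw [← ofReal_integral_eq_lintegral_ofReal (Integrable.fintype_prod_dep hI)
      (Filter.Eventually.of_forall fun x => Finset.prod_nonneg fun i _ => hnn i _),
      integral_fintype_prod_eq_prod,
      ENNReal.ofReal_prod_of_nonneg (fun i _ => integral_nonneg (hnn i))]
    refine Finset.prod_congr rfl fun i _ => ?_
    rw [ofReal_integral_eq_lintegral_ofReal (hI i) (Filter.Eventually.of_forall (hnn i)),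
      (h i).eq, withDensity_apply _ (hs i), ← lintegral_indicator (hs i)]
    refine lintegral_congr fun y => ?_
    by_cases hy : y ∈ s i <;> simp [hy]
  · rw [integral_finsetSum _ fun i _ => hint i]
    refine Finset.sum_congr rfl fun i _ => ?_
    rw [integral_comp_eval (hm i).aestronglyMeasurable, (h i).mean]

theorem HasLogDens.klDiv_toReal {E : Type*} [MeasurableSpace E] {P Q : Measure E} {L : E → ℝ}
    {k : ℝ} [IsProbabilityMeasure P] [IsProbabilityMeasure Q] (h : HasLogDens P Q L k)
    (hk : 0 ≤ k) : (klDiv Q P).toReal = k := by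
  have hac : Q ≪ P := by rw [h.eq]; exact withDensity_absolutelyContinuous _ _
  have hm := h.meas
  have hl : llr Q P =ᵐ[Q] L := by
    have : Q.rnDeriv P =ᵐ[P] fun x => ENNReal.ofReal (Real.exp (L x)) := by
      conv_lhs => rw [h.eq]
      exact Measure.rnDeriv_withDensity _ (by fun_prop)
    filter_upwards [hac.ae_le this] with x hx
    rw [llr, hx, ENNReal.toReal_ofReal (Real.exp_pos _).le, Real.log_exp]
  rw [klDiv, if_pos ⟨hac, h.integrable.congr hl.symm⟩, integral_congr_ae hl, h.mean,
    ENNReal.toReal_ofReal hk]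

/-- Donsker–Varadhan, for bounded functions. -/
theorem HasLogDens.donsker {E : Type*} [MeasurableSpace E] {P Q : Measure E} {L : E → ℝ}
    {k : ℝ} [IsProbabilityMeasure P] [IsProbabilityMeasure Q] (h : HasLogDens P Q L k)
    {f : E → ℝ} (hf : Measurable f) {C : ℝ} (hC : ∀ x, |f x| ≤ C) {M : ℝ}
    (hM : ∫⁻ x, ENNReal.ofReal (Real.exp (f x)) ∂P ≤ ENNReal.ofReal (Real.exp M)) :
    ∫ x, f x ∂Q ≤ k + M := by
  have hm := h.meas
  have hfi : Integrable f Q := Integrable.of_bound hf.aestronglyMeasurable C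
    (Filter.Eventually.of_forall hC)
  have e : ∫⁻ x, ENNReal.ofReal (Real.exp (f x - L x)) ∂Q
      = ∫⁻ x, ENNReal.ofReal (Real.exp (f x)) ∂P := by
    rw [h.eq, lintegral_withDensity_eq_lintegral_mul _ (by fun_prop) (by fun_prop)]
    refine lintegral_congr fun x => ?_
    simp only [Pi.mul_apply]
    rw [← ENNReal.ofReal_mul (Real.exp_pos _).le, ← Real.exp_add]
    congr 2
    ring
  have hle : ∫⁻ x, ENNReal.ofReal (Real.exp (f x - L x)) ∂Q ≤ ENNReal.ofReal (Real.exp M) :=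
    e ▸ hM
  have hei : Integrable (fun x => Real.exp (f x - L x)) Q := by
    refine ⟨by fun_prop, ?_⟩
    rw [hasFiniteIntegral_iff_ofReal (Filter.Eventually.of_forall fun x => (Real.exp_pos _).le)]
    exact hle.trans_lt ENNReal.ofReal_lt_top
  have hj : Real.exp (∫ x, (f x - L x) ∂Q) ≤ ∫ x, Real.exp (f x - L x) ∂Q :=
    convexOn_exp.map_integral_le Real.continuous_exp.continuousOn isClosed_univ
      (Filter.Eventually.of_forall fun _ => trivial) (hfi.sub h.integrable) hei
  have hj2 : ∫ x, Real.exp (f x - L x) ∂Q ≤ Real.exp M := by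
    rw [integral_eq_lintegral_of_nonneg_ae
      (Filter.Eventually.of_forall fun x => (Real.exp_pos _).le) hei.1]
    exact ENNReal.toReal_le_of_le_ofReal (Real.exp_pos _).le hle
  have := Real.exp_le_exp.mp (hj.trans hj2)
  rw [integral_sub hfi h.integrable, h.mean] at this
  linarith

theorem exp_sub_sq_le (x : ℝ) : Real.exp (x - x ^ 2 / 2) ≤ 1 + x + x ^ 2 / 2 := by
  have hpos : ∀ y : ℝ, 0 < 1 + y + y ^ 2 / 2 := fun y => by nlinarith [sq_nonneg (y + 1)]
  let g : ℝ → ℝ := fun y => Real.log (1 + y + y ^ 2 / 2) - y + y ^ 2 / 2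
  have hd : ∀ y, HasDerivAt g (y * (1 + y / 2 + y ^ 2 / 2) / (1 + y + y ^ 2 / 2)) y := by
    intro y
    have h1 : HasDerivAt (fun y : ℝ => 1 + y + y ^ 2 / 2) (1 + y) y := by
      have := ((hasDerivAt_id y).const_add 1).add (((hasDerivAt_id y).pow 2).div_const 2)
      refine this.congr_deriv ?_
      simp
    have := ((h1.log (hpos y).ne').sub (hasDerivAt_id y)).add
      (((hasDerivAt_id y).pow 2).div_const 2)
    refine this.congr_deriv ?_
    have := (hpos y).ne'
    simp only [id]
    rw [eq_div_iff this, add_mul, sub_mul, div_mul_cancel₀ _ this]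
    push_cast
    ring
  have hq : ∀ y : ℝ, 0 < 1 + y / 2 + y ^ 2 / 2 := fun y => by nlinarith [sq_nonneg (y + 1 / 2)]
  have hc : Continuous g := continuous_iff_continuousAt.mpr fun y => (hd y).continuousAt
  have key : 0 ≤ g x := by
    have g0 : g 0 = 0 := by simp [g]
    rcases le_total 0 x with hx | hx
    · have : MonotoneOn g (Set.Ici 0) := by
        refine monotoneOn_of_deriv_nonneg (convex_Ici 0) hc.continuousOn
          (fun y _ => (hd y).differentiableAt.differentiableWithinAt) fun y hy => ?_
        rw [interior_Ici] at hy
        rw [(hd y).deriv]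
        exact div_nonneg (mul_nonneg (le_of_lt hy) (hq y).le) (hpos y).le
      have := this (Set.self_mem_Ici) hx hx
      linarith
    · have : AntitoneOn g (Set.Iic 0) := by
        refine antitoneOn_of_deriv_nonpos (convex_Iic 0) hc.continuousOn
          (fun y _ => (hd y).differentiableAt.differentiableWithinAt) fun y hy => ?_
        rw [interior_Iic] at hy
        rw [(hd y).deriv]
        exact div_nonpos_of_nonpos_of_nonneg
          (mul_nonpos_of_nonpos_of_nonneg (le_of_lt hy) (hq y).le) (hpos y).le
      have := this hx (Set.self_mem_Iic) hx
      linarith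
  rw [← Real.le_log_iff_exp_le (hpos x)]
  simp only [g] at key
  linarith

/-- Exponential supermartingale step: one sample. -/
theorem lintegral_exp_le_one {Z : Type*} [MeasurableSpace Z] {D : Measure Z}
    [IsProbabilityMeasure D] {Y : Z → ℝ} (hY : Measurable Y) {C : ℝ} (hC : ∀ z, |Y z| ≤ C)
    {a b : ℝ} (ha : ∫ z, Y z ∂D ≤ a) (hb : ∫ z, Y z ^ 2 ∂D ≤ b) :
    ∫⁻ z, ENNReal.ofReal (Real.exp (Y z - Y z ^ 2 / 2 - a - b / 2)) ∂D ≤ 1 := by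
  have hi : Integrable Y D := Integrable.of_bound hY.aestronglyMeasurable C
    (Filter.Eventually.of_forall hC)
  have hi2 : Integrable (fun z => Y z ^ 2) D := by
    refine Integrable.of_bound (hY.pow_const 2).aestronglyMeasurable (C ^ 2)
      (Filter.Eventually.of_forall fun z => ?_)
    rw [Real.norm_eq_abs, abs_pow]
    exact pow_le_pow_left₀ (abs_nonneg _) (hC z) 2
  have h1Y : Integrable (fun z => 1 + Y z) D := (integrable_const 1).add hi
  have hmaj : Integrable (fun z => (1 + Y z + Y z ^ 2 / 2) * Real.exp (-a - b / 2)) D :=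
    (h1Y.add (hi2.div_const 2)).mul_const _
  have hle : ∀ z, Real.exp (Y z - Y z ^ 2 / 2 - a - b / 2)
      ≤ (1 + Y z + Y z ^ 2 / 2) * Real.exp (-a - b / 2) := fun z => by
    have : Y z - Y z ^ 2 / 2 - a - b / 2 = (Y z - Y z ^ 2 / 2) + (-a - b / 2) := by ring
    rw [this, Real.exp_add]
    exact mul_le_mul_of_nonneg_right (exp_sub_sq_le _) (Real.exp_pos _).le
  calc ∫⁻ z, ENNReal.ofReal (Real.exp (Y z - Y z ^ 2 / 2 - a - b / 2)) ∂D
      ≤ ∫⁻ z, ENNReal.ofReal ((1 + Y z + Y z ^ 2 / 2) * Real.exp (-a - b / 2)) ∂D :=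
        lintegral_mono fun z => ENNReal.ofReal_le_ofReal (hle z)
    _ = ENNReal.ofReal (∫ z, (1 + Y z + Y z ^ 2 / 2) * Real.exp (-a - b / 2) ∂D) :=
        (ofReal_integral_eq_lintegral_ofReal hmaj (Filter.Eventually.of_forall fun z =>
          (Real.exp_pos _).le.trans (hle z))).symm
    _ ≤ ENNReal.ofReal 1 := by
        refine ENNReal.ofReal_le_ofReal ?_
        rw [integral_mul_const, integral_add h1Y (hi2.div_const 2),
          integral_add (integrable_const 1) hi, integral_div]
        simp only [integral_const, probReal_univ, smul_eq_mul, mul_one]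
        have h1 : 1 + ∫ z, Y z ∂D + (∫ z, Y z ^ 2 ∂D) / 2 ≤ Real.exp (a + b / 2) := by
          have := Real.add_one_le_exp (a + b / 2)
          linarith
        calc _ ≤ Real.exp (a + b / 2) * Real.exp (-a - b / 2) :=
              mul_le_mul_of_nonneg_right h1 (Real.exp_pos _).le
          _ = 1 := by rw [← Real.exp_add]; simp
    _ = 1 := by simp

/-- Markov's inequality for the mixture of the exponential supermartingales. -/
theorem exists_good_event {Θ Z : Type*} [MeasurableSpace Θ] [MeasurableSpace Z]
    (P : Measure Θ) [IsProbabilityMeasure P] (D : Measure Z) [IsProbabilityMeasure D] (n : ℕ)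
    {f : Θ → Z → ℝ} (hf : Measurable fun q : Θ × Z => f q.1 q.2)
    (h1 : ∀ θ, ∫⁻ z, ENNReal.ofReal (Real.exp (f θ z)) ∂D ≤ 1) {η : ℝ} (hη : 0 < η) :
    ∃ A : Set (Fin n → Z), MeasurableSet A ∧
      (Measure.pi fun _ : Fin n => D) Aᶜ ≤ ENNReal.ofReal η ∧
      ∀ ω ∈ A, ∫⁻ θ, ENNReal.ofReal (Real.exp (∑ i, f θ (ω i))) ∂P
        ≤ ENNReal.ofReal (Real.exp (Real.log (1 / η))) := by
  set U : (Fin n → Z) → ENNReal :=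
    fun ω => ∫⁻ θ, ENNReal.ofReal (Real.exp (∑ i, f θ (ω i))) ∂P with hU
  have hj : Measurable fun q : (Fin n → Z) × Θ =>
      ENNReal.ofReal (Real.exp (∑ i, f q.2 (q.1 i))) := by
    refine ENNReal.measurable_ofReal.comp (Real.measurable_exp.comp
      (Finset.measurable_fun_sum _ fun i _ => ?_))
    exact hf.comp (measurable_snd.prodMk ((measurable_pi_apply i).comp measurable_fst))
  have hUm : Measurable U := hj.lintegral_prod_right'
  have hfm : ∀ θ, Measurable (f θ) := fun θ => hf.comp measurable_prodMk_left
  have hE : ∫⁻ ω, U ω ∂(Measure.pi fun _ : Fin n => D) ≤ 1 := by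
    rw [hU, lintegral_lintegral_swap hj.aemeasurable]
    calc _ ≤ ∫⁻ _θ, 1 ∂P := by
          refine lintegral_mono fun θ => ?_
          have hI : Integrable (fun z => Real.exp (f θ z)) D := by
            have := hfm θ
            refine ⟨by fun_prop, ?_⟩
            rw [hasFiniteIntegral_iff_ofReal
              (Filter.Eventually.of_forall fun x => (Real.exp_pos _).le)]
            exact (h1 θ).trans_lt ENNReal.one_lt_top
          simp_rw [Real.exp_sum]
          rw [← ofReal_integral_eq_lintegral_ofReal (Integrable.fintype_prod fun _ => hI)
            (Filter.Eventually.of_forall fun x => Finset.prod_nonneg fun i _ => (Real.exp_pos _).le),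
            integral_fintype_prod_eq_prod (fun _ => fun z => Real.exp (f θ z)),
            ENNReal.ofReal_prod_of_nonneg
              (fun i _ => integral_nonneg fun _ => (Real.exp_pos _).le),
            ofReal_integral_eq_lintegral_ofReal hI
              (Filter.Eventually.of_forall fun _ => (Real.exp_pos _).le)]
          exact Finset.prod_le_one' fun _ _ => h1 θ
      _ = 1 := by simp
  refine ⟨{ω | U ω ≤ ENNReal.ofReal (1 / η)}, measurableSet_le hUm measurable_const, ?_, ?_⟩
  · have hsub : {ω | U ω ≤ ENNReal.ofReal (1 / η)}ᶜ ⊆ {ω | ENNReal.ofReal (1 / η) ≤ U ω} := by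
      intro ω hω
      simp only [Set.mem_compl_iff, Set.mem_ofPred_eq, not_le] at hω
      exact hω.le
    refine (measure_mono hsub).trans ?_
    have hp : 0 < 1 / η := by positivity
    refine (meas_ge_le_lintegral_div hUm.aemeasurable (ENNReal.ofReal_pos.mpr hp).ne'
      ENNReal.ofReal_ne_top).trans ?_
    refine (ENNReal.div_le_div_right hE _).trans ?_
    rw [one_div, one_div, ENNReal.ofReal_inv_of_pos hη, inv_inv]
  · intro ω hω
    rw [Real.exp_log (by positivity)]
    exact hω

theorem core_bound {X Θ : Type*} [MeasurableSpace X] [MeasurableSpace Θ] {K : ℕ}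
    (ν : Measure X) [IsProbabilityMeasure ν] (c : X → Fin K → ℝ)
    (hcmeas : ∀ a, Measurable fun x => c x a)
    (hc : ∀ x a, c x a ∈ Set.Icc (-1 : ℝ) 0)
    (κ0 : Kernel X (Fin K)) [IsMarkovKernel κ0]
    (hκ0 : ∀ x a, κ0 x {a} = ENNReal.ofReal ((K : ℝ)⁻¹))
    (ev : Θ → X → Fin K) (hev : Measurable fun q : Θ × X => ev q.1 q.2)
    (P : Measure Θ) [IsProbabilityMeasure P] (n : ℕ) (u η : ℝ) (hη : 0 < η) :
    ∃ A : Set (Fin n → X × Fin K), MeasurableSet A ∧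
      (Measure.pi fun _ : Fin n => ν ⊗ₘ κ0) Aᶜ ≤ ENNReal.ofReal η ∧
      ∀ ω ∈ A, ∀ (Q : Measure Θ) [IsProbabilityMeasure Q] (L : Θ → ℝ) (k : ℝ),
        HasLogDens P Q L k →
        u * (∑ i, c (ω i).1 (ω i).2 * (Q {θ | ev θ (ω i).1 = (ω i).2}).toReal)
          - u ^ 2 / 2 * (∑ i, (Q {θ | ev θ (ω i).1 = (ω i).2}).toReal * c (ω i).1 (ω i).2 ^ 2)
          - n * (u * ((K : ℝ)⁻¹ * ∫ x, ∑ a, (Q {θ | ev θ x = a}).toReal * c x a ∂ν))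
          - n * (u ^ 2 * (K : ℝ)⁻¹ / 2) ≤ k + Real.log (1 / η) := by
  let ℓ : Θ → X × Fin K → ℝ := fun θ z => if ev θ z.1 = z.2 then c z.1 z.2 else 0
  have hcm : Measurable fun z : X × Fin K => c z.1 z.2 :=
    measurable_from_prod_countable_left fun a => hcmeas a
  have hℓ : Measurable fun q : Θ × (X × Fin K) => ℓ q.1 q.2 := by
    refine Measurable.ite (measurableSet_eq_fun ?_ ?_) (hcm.comp measurable_snd) measurable_const
    · exact hev.comp (measurable_fst.prodMk measurable_snd.fst)
    · exact measurable_snd.snd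
  have hℓθ : ∀ θ, Measurable (ℓ θ) := fun θ => hℓ.comp measurable_prodMk_left
  have hℓz : ∀ z, Measurable fun θ => ℓ θ z := fun z => hℓ.comp measurable_prodMk_right
  have hℓb : ∀ θ z, |ℓ θ z| ≤ 1 := fun θ z => by
    simp only [ℓ]
    split_ifs
    · rw [abs_le]; have := hc z.1 z.2; constructor <;> linarith [this.1, this.2]
    · simp
  have hℓsum : ∀ θ x, ∑ a, ℓ θ (x, a) = c x (ev θ x) := fun θ x => by simp [ℓ]
  have hℓsum2 : ∀ θ x, ∑ a, ℓ θ (x, a) ^ 2 = c x (ev θ x) ^ 2 := fun θ x => by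
    simp [ℓ, ite_pow]
  have hκr : ∀ x a, (κ0 x).real {a} = (K : ℝ)⁻¹ := fun x a => by
    rw [measureReal_def, hκ0, ENNReal.toReal_ofReal (by positivity)]
  have hint : ∀ g : X × Fin K → ℝ, Measurable g → (∀ z, |g z| ≤ 1) →
      ∫ z, g z ∂(ν ⊗ₘ κ0) = ∫ x, (K : ℝ)⁻¹ * ∑ a, g (x, a) ∂ν := by
    intro g hg hgb
    rw [Measure.integral_compProd (Integrable.of_bound hg.aestronglyMeasurable 1
      (Filter.Eventually.of_forall hgb))]
    refine integral_congr_ae (Filter.Eventually.of_forall fun x => ?_)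
    simp only
    rw [integral_fintype (Integrable.of_finite), Finset.mul_sum]
    simp [hκr]
  have hevx : ∀ x, Measurable fun θ => ev θ x := fun x => hev.comp measurable_prodMk_right
  have hcev : Measurable fun q : Θ × X => c q.2 (ev q.1 q.2) :=
    hcm.comp (measurable_snd.prodMk hev)
  have hcb : ∀ x a, |c x a| ≤ 1 := fun x a => by
    rw [abs_le]; have := hc x a; constructor <;> linarith [this.1, this.2]
  let M : Θ → ℝ := fun θ => (K : ℝ)⁻¹ * ∫ x, c x (ev θ x) ∂ν
  have hMm : Measurable M :=
    (hcev.stronglyMeasurable.integral_prod_right').measurable.const_mul _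
  have hMb : ∀ θ, |M θ| ≤ (K : ℝ)⁻¹ := fun θ => by
    simp only [M]
    rw [abs_mul, abs_of_nonneg (by positivity)]
    refine mul_le_of_le_one_right (by positivity) ?_
    have := norm_integral_le_of_norm_le_const (μ := ν) (f := fun x => c x (ev θ x)) (C := 1)
      (Filter.Eventually.of_forall fun x => hcb _ _)
    simpa using this
  have hmean : ∀ θ, ∫ z, ℓ θ z ∂(ν ⊗ₘ κ0) = M θ := fun θ => by
    rw [hint _ (hℓθ θ) (hℓb θ), integral_const_mul]
    simp only [M, hℓsum]
  have hsq : ∀ θ, ∫ z, ℓ θ z ^ 2 ∂(ν ⊗ₘ κ0) ≤ (K : ℝ)⁻¹ := fun θ => by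
    rw [hint _ ((hℓθ θ).pow_const 2) (fun z => by
      rw [abs_pow]; exact pow_le_one₀ (abs_nonneg _) (hℓb θ z)), integral_const_mul]
    refine mul_le_of_le_one_right (by positivity) ?_
    simp only [hℓsum2]
    have := norm_integral_le_of_norm_le_const (μ := ν) (f := fun x => c x (ev θ x) ^ 2) (C := 1)
      (Filter.Eventually.of_forall fun x => by
        rw [Real.norm_eq_abs, abs_pow]; exact pow_le_one₀ (abs_nonneg _) (hcb _ _))
    simp only [probReal_univ, mul_one] at this
    exact (le_abs_self _).trans this
  let f : Θ → X × Fin K → ℝ := fun θ z =>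
    u * ℓ θ z - (u * ℓ θ z) ^ 2 / 2 - u * M θ - u ^ 2 * (K : ℝ)⁻¹ / 2
  have hfm : Measurable fun q : Θ × (X × Fin K) => f q.1 q.2 := by
    have : Measurable fun q : Θ × (X × Fin K) => M q.1 := hMm.comp measurable_fst
    exact (((hℓ.const_mul u).sub (((hℓ.const_mul u).pow_const 2).div_const 2)).sub
      (this.const_mul u)).sub measurable_const
  have hf1 : ∀ θ, ∫⁻ z, ENNReal.ofReal (Real.exp (f θ z)) ∂(ν ⊗ₘ κ0) ≤ 1 := fun θ => by
    refine lintegral_exp_le_one (Y := fun z => u * ℓ θ z) ((hℓθ θ).const_mul u) (C := |u|)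
      (fun z => ?_) ?_ ?_
    · rw [abs_mul]; exact mul_le_of_le_one_right (abs_nonneg _) (hℓb θ z)
    · rw [integral_const_mul, hmean]
    · simp_rw [mul_pow]
      rw [integral_const_mul]
      exact mul_le_mul_of_nonneg_left (hsq θ) (sq_nonneg u)
  obtain ⟨A, hA, hAm, hAb⟩ := exists_good_event P (ν ⊗ₘ κ0) n hfm hf1 hη
  refine ⟨A, hA, hAm, fun ω hω Q _ L k hL => ?_⟩
  have hfz : ∀ z, Measurable fun θ => f θ z := fun z => hfm.comp measurable_prodMk_right
  have hfb : ∀ θ z, |f θ z| ≤ |u| + u ^ 2 / 2 + |u| * (K : ℝ)⁻¹ + u ^ 2 * (K : ℝ)⁻¹ / 2 := by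
    intro θ z
    have a1 : |u * ℓ θ z| ≤ |u| := by
      rw [abs_mul]; exact mul_le_of_le_one_right (abs_nonneg _) (hℓb θ z)
    have a2 : (u * ℓ θ z) ^ 2 ≤ u ^ 2 := sq_le_sq.mpr a1
    have a3 : |u * M θ| ≤ |u| * (K : ℝ)⁻¹ := by
      rw [abs_mul]; exact mul_le_mul_of_nonneg_left (hMb θ) (abs_nonneg _)
    have a4 : 0 ≤ u ^ 2 * (K : ℝ)⁻¹ / 2 := by positivity
    rw [abs_le] at a1 a3 ⊢
    simp only [f]
    have := sq_nonneg (u * ℓ θ z)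
    constructor <;> linarith [a1.1, a1.2, a3.1, a3.2, sq_nonneg u]
  have hbound := hL.donsker (f := fun θ => ∑ i, f θ (ω i))
    (Finset.measurable_fun_sum _ fun i _ => hfz (ω i))
    (C := ∑ _i : Fin n, (|u| + u ^ 2 / 2 + |u| * (K : ℝ)⁻¹ + u ^ 2 * (K : ℝ)⁻¹ / 2))
    (fun θ => (Finset.abs_sum_le_sum_abs _ _).trans (Finset.sum_le_sum fun i _ => hfb θ (ω i)))
    (hAb ω hω)
  refine le_trans (le_of_eq ?_) hbound
  have hfi : ∀ z, Integrable (fun θ => f θ z) Q := fun z =>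
    Integrable.of_bound (hfz z).aestronglyMeasurable _ (Filter.Eventually.of_forall fun θ => hfb θ z)
  rw [integral_finsetSum _ fun i _ => hfi _]
  have hset : ∀ x a, MeasurableSet {θ | ev θ x = a} := fun x a =>
    hevx x (measurableSet_singleton a)
  have hite : ∀ x a (r : ℝ), ∫ θ, (if ev θ x = a then r else 0) ∂Q
      = (Q {θ | ev θ x = a}).toReal * r := fun x a r => by
    have : (fun θ => if ev θ x = a then r else 0)
        = {θ | ev θ x = a}.indicator fun _ => r := by
      funext θ; simp [Set.indicator]
    rw [this, integral_indicator_const _ (hset x a), smul_eq_mul, measureReal_def]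
  have hitei : ∀ x a (r : ℝ), Integrable (fun θ => (if ev θ x = a then r else 0)) Q :=
    fun x a r => Integrable.of_bound
      (Measurable.ite (hset x a) measurable_const measurable_const).aestronglyMeasurable |r|
      (Filter.Eventually.of_forall fun θ => by split_ifs <;> simp)
  have hMi : Integrable M Q := Integrable.of_bound hMm.aestronglyMeasurable _
    (Filter.Eventually.of_forall hMb)
  have hMint : ∫ θ, M θ ∂Q = (K : ℝ)⁻¹ * ∫ x, ∑ a, (Q {θ | ev θ x = a}).toReal * c x a ∂ν := by
    simp only [M]
    rw [integral_const_mul, integral_integral_swap]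
    · congr 1
      refine integral_congr_ae (Filter.Eventually.of_forall fun x => ?_)
      simp only
      have : ∀ θ, c x (ev θ x) = ∑ a, if ev θ x = a then c x a else 0 := fun θ => by simp
      simp_rw [this]
      rw [integral_finsetSum _ fun a _ => hitei x a _]
      simp_rw [hite]
    · exact Integrable.of_bound hcev.aestronglyMeasurable 1
        (Filter.Eventually.of_forall fun q => hcb _ _)
  have hone : ∀ z : X × Fin K, ∫ θ, f θ z ∂Q =
      u * (c z.1 z.2 * (Q {θ | ev θ z.1 = z.2}).toReal)
      - u ^ 2 / 2 * ((Q {θ | ev θ z.1 = z.2}).toReal * c z.1 z.2 ^ 2)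
      - u * ((K : ℝ)⁻¹ * ∫ x, ∑ a, (Q {θ | ev θ x = a}).toReal * c x a ∂ν)
      - u ^ 2 * (K : ℝ)⁻¹ / 2 := fun z => by
    have e : ∀ θ, f θ z = u * (if ev θ z.1 = z.2 then c z.1 z.2 else 0)
        - u ^ 2 / 2 * (if ev θ z.1 = z.2 then c z.1 z.2 ^ 2 else 0)
        - u * M θ - u ^ 2 * (K : ℝ)⁻¹ / 2 := fun θ => by
      simp only [f, ℓ]
      split_ifs <;> ring
    simp_rw [e]
    rw [integral_sub, integral_sub, integral_sub, integral_const_mul, integral_const_mul,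
      integral_const_mul, hite, hite, hMint]
    · rw [integral_const, probReal_univ, one_smul]
      ring
    · exact (hitei _ _ _).const_mul _
    · exact (hitei _ _ _).const_mul _
    · exact ((hitei _ _ _).const_mul _).sub ((hitei _ _ _).const_mul _)
    · exact hMi.const_mul _
    · exact (((hitei _ _ _).const_mul _).sub ((hitei _ _ _).const_mul _)).sub (hMi.const_mul _)
    · exact integrable_const _
  simp_rw [hone]
  simp only [Finset.sum_sub_distrib, ← Finset.mul_sum, Finset.sum_const, Finset.card_univ,
    Fintype.card_fin, nsmul_eq_mul]
  ring

/-- The elementary inequality at the end of the proof. -/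
theorem final_arith {s n w Ki R Rs S1 S2 S1s S2s k ks l2 l4 L q qs ε N2 Fh Fs : ℝ}
    (hs : 0 < s) (hn : n = s ^ 2) (hKi1 : Ki ≤ 1) (hwK : w * Ki ≤ 1)
    (hR : R ≤ 0) (hRs : -1 ≤ Rs) (hl : l2 ≤ l4) (hq : 0 ≤ q)
    (hS2s : S2s ≤ n) (hks : ks = N2 / 2)
    (hqs : qs ≤ (√N2 + L) / (2 * s)) (hL : 0 ≤ L)
    (h1 : -(w / s) * S1 - (-(w / s)) ^ 2 / 2 * S2 - n * (-(w / s) * (Ki * R))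
      - n * ((-(w / s)) ^ 2 * Ki / 2) ≤ k + l2)
    (h2 : (w / s) * S1s - (w / s) ^ 2 / 2 * S2s - n * ((w / s) * (Ki * Rs))
      - n * ((w / s) ^ 2 * Ki / 2) ≤ ks + l2)
    (hFh : Fh = n⁻¹ * (S1 * w) + q + (1 - w * Ki) + (k + l4) / s
      + s⁻¹ / 2 * (w ^ 2 * Ki + n⁻¹ * (S2 * w ^ 2)))
    (hFs : Fs = n⁻¹ * (S1s * w) + qs + (1 - w * Ki) + (ks + l4) / s
      + s⁻¹ / 2 * (w ^ 2 * Ki + n⁻¹ * (S2s * w ^ 2)))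
    (hFF : Fh ≤ Fs)
    (hcond : (√N2 + N2 + 2 * l4 + L + 2 * w ^ 2) ≤ s * (ε - 2 * (1 - w * Ki))) :
    R ≤ Rs + ε := by
  subst hn
  -- divide both concentration bounds by `s`
  have d1 : w * Ki * R ≤ (s ^ 2)⁻¹ * (S1 * w) + (k + l2) / s
      + s⁻¹ / 2 * (w ^ 2 * Ki + (s ^ 2)⁻¹ * (S2 * w ^ 2)) := by
    have := div_le_div_of_nonneg_right h1 hs.le
    have e : (-(w / s) * S1 - (-(w / s)) ^ 2 / 2 * S2 - s ^ 2 * (-(w / s) * (Ki * R))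
      - s ^ 2 * ((-(w / s)) ^ 2 * Ki / 2)) / s = w * Ki * R - (s ^ 2)⁻¹ * (S1 * w)
      - s⁻¹ / 2 * (w ^ 2 * Ki + (s ^ 2)⁻¹ * (S2 * w ^ 2)) := by
      field_simp
      ring
    linarith
  have d2 : (s ^ 2)⁻¹ * (S1s * w) ≤ w * Ki * Rs + (ks + l2) / s
      + s⁻¹ / 2 * (w ^ 2 * Ki + (s ^ 2)⁻¹ * (S2s * w ^ 2)) := by
    have := div_le_div_of_nonneg_right h2 hs.le
    have e : ((w / s) * S1s - (w / s) ^ 2 / 2 * S2s - s ^ 2 * ((w / s) * (Ki * Rs))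
      - s ^ 2 * ((w / s) ^ 2 * Ki / 2)) / s = (s ^ 2)⁻¹ * (S1s * w) - w * Ki * Rs
      - s⁻¹ / 2 * (w ^ 2 * Ki + (s ^ 2)⁻¹ * (S2s * w ^ 2)) := by
      field_simp
      ring
    linarith
  have m1 : ∀ y, (y + l2) / s ≤ (y + l4) / s := fun y =>
    div_le_div_of_nonneg_right (by linarith) hs.le
  have m1k := m1 k
  have m1ks := m1 ks
  have b1 : R ≤ w * Ki * R := by nlinarith
  have b2 : w * Ki * Rs ≤ Rs + (1 - w * Ki) := by nlinarith
  have v : w ^ 2 * Ki + (s ^ 2)⁻¹ * (S2s * w ^ 2) ≤ 2 * w ^ 2 := by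
    have v1 : w ^ 2 * Ki ≤ w ^ 2 := mul_le_of_le_one_right (sq_nonneg _) hKi1
    have v2 : (s ^ 2)⁻¹ * (S2s * w ^ 2) ≤ w ^ 2 := by
      rw [inv_mul_le_iff₀ (by positivity)]
      exact mul_le_mul_of_nonneg_right hS2s (sq_nonneg _)
    linarith
  have v' : s⁻¹ * (w ^ 2 * Ki + (s ^ 2)⁻¹ * (S2s * w ^ 2)) ≤ s⁻¹ * (2 * w ^ 2) :=
    mul_le_mul_of_nonneg_left v (by positivity)
  have hqs' : qs ≤ (√N2 + L) / s := hqs.trans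
    (div_le_div_of_nonneg_left (by positivity) hs (by linarith))
  have c' : (√N2 + N2 + 2 * l4 + L + 2 * w ^ 2) / s ≤ ε - 2 * (1 - w * Ki) := by
    rw [div_le_iff₀ hs]; linarith
  have e : (√N2 + N2 + 2 * l4 + L + 2 * w ^ 2) / s
      = (√N2 + L) / s + 2 * ((ks + l4) / s) + s⁻¹ * (2 * w ^ 2) := by
    rw [hks]; field_simp; ring
  linarith

theorem sqrt_arith {s N2 l : ℝ} (hs0 : 0 < s) (hN20 : 0 ≤ N2) (hl : 0 ≤ l) :
    √((N2 / 2 + l) / (2 * s ^ 2)) ≤ (√N2 + √(2 * l)) / (2 * s) := by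
  refine Real.sqrt_le_iff.mpr ⟨by positivity, ?_⟩
  have q1 := Real.sq_sqrt hN20
  have q2 := Real.sq_sqrt (show 0 ≤ 2 * l by linarith)
  have q3 := mul_nonneg (Real.sqrt_nonneg N2) (Real.sqrt_nonneg (2 * l))
  have h : N2 + 2 * l ≤ (√N2 + √(2 * l)) ^ 2 := by nlinarith
  have e : (N2 / 2 + l) / (2 * s ^ 2) = (N2 + 2 * l) / (2 * s) ^ 2 := by
    field_simp
  rw [div_pow, e]
  exact div_le_div_of_nonneg_right h (by positivity)

/-- **Sample complexity under uniform logging.**  In the setting of the oracle inequality for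
Gaussian linear policies under uniform logging, if `α ∈ [1 − log 2/log K, 1]`,
`ε > 2(1 − K^(α−1))` and `√n` is at least
`(‖μstar − μ0‖ + ‖μstar − μ0‖² + 2 log(4/δ) + √(2 log(4√n/δ)) + 2 K^(2α)) / (ε − 2(1 − K^(α−1)))`,
then with probability at least `1 − δ`, the risk of the learned policy is within `ε` of the
optimal risk. -/
theorem sample_complexity_gaussian_uniform_logging
    {X : Type*} [MeasurableSpace X] {d K : ℕ} (hK : 0 < K)
    (ν : Measure X) [IsProbabilityMeasure ν]
    (c : X → Fin K → ℝ)
    (hcmeas : ∀ a, Measurable fun x => c x a)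
    (hc : ∀ x a, c x a ∈ Set.Icc (-1 : ℝ) 0)
    (φ : X → Fin d → ℝ) (hφ : Measurable φ)
    (p0 : X → Fin K → ℝ) (huniform : ∀ x a, p0 x a = (K : ℝ)⁻¹)
    (κ0 : Kernel X (Fin K)) [IsMarkovKernel κ0]
    (hκ0 : ∀ x a, κ0 x {a} = ENNReal.ofReal (p0 x a))
    (ev : (Fin K → Fin d → ℝ) → X → Fin K)
    (hev : Measurable fun q : (Fin K → Fin d → ℝ) × X => ev q.1 q.2)
    (hargmax : ∀ (θ : Fin K → Fin d → ℝ) (x : X) (a : Fin K),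
      ∑ j, φ x j * θ a j ≤ ∑ j, φ x j * θ (ev θ x) j)
    (G : (Fin K → Fin d → ℝ) → Measure (Fin K → Fin d → ℝ))
    (hG : ∀ μm : Fin K → Fin d → ℝ,
      G μm = Measure.pi fun a => Measure.pi fun j => gaussianReal (μm a j) 1)
    (μ0 : Fin K → Fin d → ℝ)
    (n : ℕ) (hn : 1 ≤ n) (δ : ℝ) (hδ : δ ∈ Set.Ioo (0 : ℝ) 1)
    (α : ℝ) (hα : α ∈ Set.Icc (0 : ℝ) 1)
    (Rk : (Fin K → Fin d → ℝ) → ℝ)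
    (hRk : ∀ μm : Fin K → Fin d → ℝ,
      Rk μm = ∫ x, ∑ a, ((G μm) {θ | ev θ x = a}).toReal * c x a ∂ν)
    (F : (Fin n → X × Fin K) → (Fin K → Fin d → ℝ) → ℝ)
    (hF : ∀ (ω : Fin n → X × Fin K) (μm : Fin K → Fin d → ℝ), F ω μm =
      (n : ℝ)⁻¹ * (∑ i, c (ω i).1 (ω i).2 * ((G μm) {θ | ev θ (ω i).1 = (ω i).2}).toReal
          / p0 (ω i).1 (ω i).2 ^ α)
        + Real.sqrt (((klDiv (G μm) (G μ0)).toReal + Real.log (4 * Real.sqrt n / δ))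
            / (2 * n))
        + (1 - (n : ℝ)⁻¹ * ∑ i, ∑ a,
            ((G μm) {θ | ev θ (ω i).1 = a}).toReal * p0 (ω i).1 a ^ (1 - α))
        + ((klDiv (G μm) (G μ0)).toReal + Real.log (4 / δ)) / (n * (Real.sqrt n)⁻¹)
        + (Real.sqrt n)⁻¹ / 2 * ((n : ℝ)⁻¹ * ∑ i,
            ((∑ a, p0 (ω i).1 a *
                (((G μm) {θ | ev θ (ω i).1 = a}).toReal / p0 (ω i).1 a ^ (2 * α)))
              + ((G μm) {θ | ev θ (ω i).1 = (ω i).2}).toReal * c (ω i).1 (ω i).2 ^ 2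
                  / p0 (ω i).1 (ω i).2 ^ (2 * α))))
    (μhat : (Fin n → X × Fin K) → Fin K → Fin d → ℝ)
    (hμhat : ∀ (ω : Fin n → X × Fin K) (μm : Fin K → Fin d → ℝ), F ω (μhat ω) ≤ F ω μm)
    (μstar : Fin K → Fin d → ℝ)
    (hμstar : ∀ μm : Fin K → Fin d → ℝ, Rk μstar ≤ Rk μm)
    (N2 : ℝ) (hN2 : N2 = ∑ a, ∑ j, (μstar a j - μ0 a j) ^ 2)
    (hαlow : 1 - Real.log 2 / Real.log K ≤ α)
    (ε : ℝ) (hε : 2 * (1 - (K : ℝ) ^ (α - 1)) < ε)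
    (hcond : (Real.sqrt N2 + N2 + 2 * Real.log (4 / δ)
          + Real.sqrt (2 * Real.log (4 * Real.sqrt n / δ)) + 2 * (K : ℝ) ^ (2 * α))
        / (ε - 2 * (1 - (K : ℝ) ^ (α - 1))) ≤ Real.sqrt n) :
    ENNReal.ofReal (1 - δ) ≤
      (Measure.pi fun _ : Fin n => ν ⊗ₘ κ0)
        {ω | Rk (μhat ω) ≤ Rk μstar + ε} := by
  have hGp : ∀ m, IsProbabilityMeasure (G m) := fun m => by rw [hG]; infer_instance
  obtain ⟨hδ0, hδ1⟩ := hδ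
  have hnR : (1 : ℝ) ≤ n := by exact_mod_cast hn
  have hn0 : (0 : ℝ) < n := by linarith
  have hKR : (1 : ℝ) ≤ K := by exact_mod_cast hK
  have hK0 : (0 : ℝ) < K := by linarith
  set s : ℝ := Real.sqrt n with hs
  have hs1 : 1 ≤ s := Real.one_le_sqrt.mpr hnR
  have hs0 : 0 < s := by linarith
  have hs2 : (n : ℝ) = s ^ 2 := (Real.sq_sqrt hn0.le).symm
  set w : ℝ := (K : ℝ) ^ α with hw
  have hw0 : 0 < w := Real.rpow_pos_of_pos hK0 _
  have hw2 : (K : ℝ) ^ (2 * α) = w ^ 2 := by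
    rw [mul_comm, Real.rpow_mul hK0.le, Real.rpow_two]
  have hwK : (K : ℝ) ^ (α - 1) = w * (K : ℝ)⁻¹ := by
    rw [Real.rpow_sub_one hK0.ne', div_eq_mul_inv]
  have hwK1 : w * (K : ℝ)⁻¹ ≤ 1 := by
    rw [← hwK]; exact Real.rpow_le_one_of_one_le_of_nonpos hKR (by linarith [hα.2])
  have hKi1 : (K : ℝ)⁻¹ ≤ 1 := inv_le_one_of_one_le₀ hKR
  -- divergences
  let kk : (Fin K → Fin d → ℝ) → ℝ := fun m => ∑ a, ∑ j, (m a j - μ0 a j) ^ 2 / 2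
  have hdens : ∀ m, HasLogDens (G μ0) (G m)
      (fun θ => ∑ a, ∑ j, ((m a j - μ0 a j) * θ a j - (m a j ^ 2 - μ0 a j ^ 2) / 2)) (kk m) := by
    intro m
    rw [hG, hG]
    exact HasLogDens.pi (fun a => HasLogDens.pi fun j => hasLogDens_gaussian (m a j) (μ0 a j))
  have hkk0 : ∀ m, 0 ≤ kk m := fun m =>
    Finset.sum_nonneg fun a _ => Finset.sum_nonneg fun j _ => by positivity
  have hkl : ∀ m, (klDiv (G m) (G μ0)).toReal = kk m := fun m => (hdens m).klDiv_toReal (hkk0 m)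
  -- policies
  have hset : ∀ x a, MeasurableSet {θ | ev θ x = a} := fun x a =>
    (hev.comp measurable_prodMk_right : Measurable fun θ => ev θ x) (measurableSet_singleton a)
  have hpi0 : ∀ m x a, 0 ≤ ((G m) {θ | ev θ x = a}).toReal := fun m x a => ENNReal.toReal_nonneg
  have hpi1 : ∀ m x a, ((G m) {θ | ev θ x = a}).toReal ≤ 1 := fun m x a =>
    ENNReal.toReal_le_of_le_ofReal zero_le_one (by simpa using prob_le_one)
  have hpis : ∀ m x, ∑ a, ((G m) {θ | ev θ x = a}).toReal = 1 := by
    intro m x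
    have := sum_measureReal_preimage_singleton (μ := G m) (f := fun θ => ev θ x) Finset.univ
      (fun a _ => hset x a)
    simp only [measureReal_def, Finset.coe_univ, Set.preimage_univ, measure_univ,
      ENNReal.toReal_one] at this
    exact this
  have hrow0 : ∀ m x, ∑ a, ((G m) {θ | ev θ x = a}).toReal * c x a ≤ 0 := fun m x =>
    Finset.sum_nonpos fun a _ => mul_nonpos_of_nonneg_of_nonpos (hpi0 m x a) (hc x a).2
  have hrow1 : ∀ m x, -1 ≤ ∑ a, ((G m) {θ | ev θ x = a}).toReal * c x a := fun m x => by
    calc (-1 : ℝ) = ∑ a, ((G m) {θ | ev θ x = a}).toReal * (-1) := by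
          rw [← Finset.sum_mul, hpis]; ring
      _ ≤ _ := Finset.sum_le_sum fun a _ => mul_le_mul_of_nonneg_left (hc x a).1 (hpi0 m x a)
  have hR0 : ∀ m, Rk m ≤ 0 := fun m => by rw [hRk]; exact integral_nonpos (hrow0 m)
  have hR1 : ∀ m, -1 ≤ Rk m := fun m => by
    rw [hRk]
    have := norm_integral_le_of_norm_le_const (μ := ν)
      (f := fun x => ∑ a, ((G m) {θ | ev θ x = a}).toReal * c x a) (C := 1)
      (Filter.Eventually.of_forall fun x => by
        rw [Real.norm_eq_abs, abs_le]; exact ⟨hrow1 m x, (hrow0 m x).trans zero_le_one⟩)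
    simp only [probReal_univ, mul_one, Real.norm_eq_abs] at this
    exact (abs_le.mp this).1
  -- simplified objective
  let S1 : (Fin n → X × Fin K) → (Fin K → Fin d → ℝ) → ℝ := fun ω m =>
    ∑ i, c (ω i).1 (ω i).2 * ((G m) {θ | ev θ (ω i).1 = (ω i).2}).toReal
  let S2 : (Fin n → X × Fin K) → (Fin K → Fin d → ℝ) → ℝ := fun ω m =>
    ∑ i, ((G m) {θ | ev θ (ω i).1 = (ω i).2}).toReal * c (ω i).1 (ω i).2 ^ 2
  have hp1 : ((K : ℝ)⁻¹) ^ α = w⁻¹ := Real.inv_rpow hK0.le _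
  have hp2 : ((K : ℝ)⁻¹) ^ (2 * α) = (w ^ 2)⁻¹ := by rw [Real.inv_rpow hK0.le, hw2]
  have hp3 : ((K : ℝ)⁻¹) ^ (1 - α) = w * (K : ℝ)⁻¹ := by
    rw [Real.inv_rpow hK0.le, ← Real.rpow_neg hK0.le, ← hwK]; congr 1; ring
  have hFe : ∀ ω m, F ω m = (n : ℝ)⁻¹ * (S1 ω m * w)
      + Real.sqrt ((kk m + Real.log (4 * s / δ)) / (2 * n)) + (1 - w * (K : ℝ)⁻¹)
      + (kk m + Real.log (4 / δ)) / s
      + s⁻¹ / 2 * (w ^ 2 * (K : ℝ)⁻¹ + (n : ℝ)⁻¹ * (S2 ω m * w ^ 2)) := by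
    intro ω m
    rw [hF, hkl]
    simp only [huniform, hp1, hp2, hp3, div_inv_eq_mul]
    have e1 : (n : ℝ) * s⁻¹ = s := by rw [hs2]; field_simp
    have e2 : ∀ i, ∑ a, ((G m) {θ | ev θ (ω i).1 = a}).toReal * (w * (K : ℝ)⁻¹)
        = w * (K : ℝ)⁻¹ := fun i => by rw [← Finset.sum_mul, hpis, one_mul]
    have e3 : ∀ i, ∑ a, (K : ℝ)⁻¹ * (((G m) {θ | ev θ (ω i).1 = a}).toReal * w ^ 2)
        = w ^ 2 * (K : ℝ)⁻¹ := fun i => by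
      rw [← Finset.mul_sum, ← Finset.sum_mul, hpis, one_mul, mul_comm]
    rw [e1]
    simp only [e2, e3, Finset.sum_add_distrib, Finset.sum_const, Finset.card_univ,
      Fintype.card_fin, nsmul_eq_mul, ← Finset.sum_mul]
    rw [inv_mul_cancel_left₀ hn0.ne', mul_add, inv_mul_cancel_left₀ hn0.ne']
  -- good events
  have hκ0' : ∀ x a, κ0 x {a} = ENNReal.ofReal ((K : ℝ)⁻¹) := fun x a => by
    rw [hκ0, huniform]
  obtain ⟨A1, hA1, hA1m, hA1b⟩ := core_bound ν c hcmeas hc κ0 hκ0' ev hev (G μ0) n (-(w / s))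
    (δ / 2) (by linarith)
  obtain ⟨A2, hA2, hA2m, hA2b⟩ := core_bound ν c hcmeas hc κ0 hκ0' ev hev (G μ0) n (w / s)
    (δ / 2) (by linarith)
  have hgood : A1 ∩ A2 ⊆ {ω | Rk (μhat ω) ≤ Rk μstar + ε} := by
    rintro ω ⟨h1, h2⟩
    have b1 := hA1b ω h1 (G (μhat ω)) _ _ (hdens (μhat ω))
    have b2 := hA2b ω h2 (G μstar) _ _ (hdens μstar)
    rw [← hRk] at b1 b2
    have hL0 : 0 ≤ Real.log (4 * s / δ) := by
      refine Real.log_nonneg ?_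
      rw [le_div_iff₀ hδ0]; linarith
    have hN20 : 0 ≤ N2 := by
      rw [hN2]; exact Finset.sum_nonneg fun a _ => Finset.sum_nonneg fun j _ => sq_nonneg _
    have hks : kk μstar = N2 / 2 := by
      simp only [kk, hN2, ← Finset.sum_div]
    refine final_arith hs0 hs2 hKi1 hwK1 (hR0 _) (hR1 _) (l4 := Real.log (4 / δ))
      (L := Real.sqrt (2 * Real.log (4 * s / δ))) (N2 := N2) ?_ (Real.sqrt_nonneg _) ?_ hks ?_
      (Real.sqrt_nonneg _) b1 b2 (hFe ω _) (hFe ω _) (hμhat ω μstar) ?_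
    · refine Real.log_le_log (by positivity) ?_
      rw [one_div_div]
      exact div_le_div_of_nonneg_right (by norm_num) hδ0.le
    · calc S2 ω μstar ≤ ∑ _i : Fin n, (1 : ℝ) := by
            refine Finset.sum_le_sum fun i _ => ?_
            refine mul_le_one₀ (hpi1 _ _ _) (sq_nonneg _) ?_
            have := hc (ω i).1 (ω i).2
            nlinarith [this.1, this.2]
        _ = n := by simp
    · rw [hks, hs2]
      exact sqrt_arith hs0 hN20 hL0
    · rw [hwK, hw2] at hcond
      rw [hwK] at hε
      rwa [div_le_iff₀ (by linarith)] at hcond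
  refine le_trans ?_ (measure_mono hgood)
  have hcompl : (Measure.pi fun _ : Fin n => ν ⊗ₘ κ0) (A1 ∩ A2)ᶜ ≤ ENNReal.ofReal δ := by
    rw [Set.compl_inter]
    refine (measure_union_le _ _).trans ((add_le_add hA1m hA2m).trans ?_)
    rw [← ENNReal.ofReal_add (by linarith) (by linarith)]
    exact ENNReal.ofReal_le_ofReal (by linarith)
  have hone := prob_add_prob_compl (μ := Measure.pi fun _ : Fin n => ν ⊗ₘ κ0) (hA1.inter hA2)
  rw [ENNReal.ofReal_sub _ hδ0.le, ENNReal.ofReal_one, tsub_le_iff_right, ← hone]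
  exact add_le_add le_rfl hcompl
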